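/- (KL decomposition for the transportation posterior, finite-dimensional case.) Let d ≥ 1 and let F be a measurable subset of ℝ^d. Let Q and U be probability measures on F, let μ : F → ℝ^d be measurable, let Σ : F → (symmetric positive definite d×d matrices) be measurable, and fix ᾱ ∈ ℝ and σ > 0. Define the probability measure Q̃ on ℝ × F × ℝ^d by Q̃(dα df dh) = N(ᾱ, σ²)(dα) Q(df) N(μ(f), e^{α}Σ(f))(dh), and the probability measure Ũ on ℝ × F × ℝ^d by Ũ(dα df dh) = 𝒰₁(σ)(dα) U(df) N(0, e^{α}Σ(f))(dh), where 𝒰₁(σ) is the Cauchy distribution with density α ↦ 1/(σπ(1+α²/σ²)). Then D_KL(Q̃‖Ũ) ≤ D_KL(Q‖U) + log( 2 + ᾱ²/σ² ) + ( ∫_F μ(f)ᵀ Σ(f)^{−1} μ(f) dQ(f) ) / ( 2 e^{ᾱ − σ²/2} ), where the last integral is assumed finite. -/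

import Mathlib

open MeasureTheory Real ProbabilityTheory Matrix
open scoped Classical

/-- The Kullback--Leibler divergence between two measures, valued in the extended reals:
`∫ log (dQ/dU) dQ` when `Q ≪ U` and the log-likelihood ratio is `Q`-integrable,
and `+∞` otherwise. -/
noncomputable def klDiv {F : Type*} [MeasurableSpace F] (Q U : Measure F) : EReal :=
  if Q ≪ U ∧ Integrable (llr Q U) Q then ((∫ f, llr Q U f ∂Q : ℝ) : EReal) else ⊤

/-- The Cauchy distribution on `ℝ` with scale `σ`, having Lebesgue density
`α ↦ 1/(σπ(1 + α²/σ²))`. -/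
noncomputable def cauchyScale (σ : ℝ) : Measure ℝ :=
  volume.withDensity fun α => ENNReal.ofReal (1 / (σ * Real.pi * (1 + α^2 / σ^2)))

/-- The multivariate Gaussian measure on `ℝ^d` with mean `μ` and (positive definite)
covariance matrix `C`, given by its Lebesgue density
`h ↦ ((2π)^d det C)^{−1/2} exp(−(h−μ)ᵀC⁻¹(h−μ)/2)`. -/
noncomputable def gaussMV (d : ℕ) (μ : Fin d → ℝ) (C : Matrix (Fin d) (Fin d) ℝ) :
    Measure (Fin d → ℝ) :=
  volume.withDensity fun h =>
    ENNReal.ofReal (((2 * Real.pi)^d * C.det) ^ (-(1:ℝ)/2) *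
      Real.exp (-((h - μ) ⬝ᵥ C⁻¹.mulVec (h - μ)) / 2))

/-!
The chain rule splits the divergence into a contribution of `(α, f)`, which for product measures
is the sum of the marginal divergences, and the average over `(α, f)` of the divergences of the
Gaussian fibres.

* In `α`, the log-density of `N(ᾱ, σ²)` against the Cauchy distribution is
  `log (1 + α²/σ²) + log (π/2) / 2 - (α - ᾱ)² / (2σ²)`. By Jensen's inequality the first term
  has mean at most `log (2 + ᾱ²/σ²)`, the last has mean `-1/2`, and `log (π/2) ≤ 1`.
* In the fibre, two Gaussians of common covariance `e^α Σ` have an affine log-density, whose mean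
  is `e^{-α} μᵀ Σ⁻¹ μ / 2`. Averaging over `α` uses the moment `E[e^{-α}] = e^{-ᾱ + σ²/2}`.
-/

section KullbackLeibler

variable {X Y : Type*} [MeasurableSpace X] [MeasurableSpace Y]

lemma klDiv_eq_coe_klDiv (Q U : Measure X) [IsProbabilityMeasure Q] [IsProbabilityMeasure U] :
    klDiv Q U = (InformationTheory.klDiv Q U : EReal) := by
  unfold klDiv
  split_ifs with h
  · have hnonneg := InformationTheory.integral_llr_add_sub_measure_univ_nonneg h.1 h.2
    rw [InformationTheory.klDiv_of_ac_of_integrable h.1 h.2, EReal.coe_ennreal_ofReal,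
      max_eq_left hnonneg, probReal_univ, probReal_univ, add_sub_cancel_right]
  · rw [InformationTheory.klDiv_eq_top_iff.2 fun hac hint => h ⟨hac, hint⟩, EReal.coe_ennreal_top]

lemma klDiv_map_measurableEquiv (μ ν : Measure X) [IsFiniteMeasure μ] [IsFiniteMeasure ν]
    (e : X ≃ᵐ Y) :
    InformationTheory.klDiv (μ.map e) (ν.map e) = InformationTheory.klDiv μ ν := by
  refine le_antisymm (InformationTheory.klDiv_map_le μ ν e.measurable) ?_
  simpa only [e.map_symm_map] using
    InformationTheory.klDiv_map_le (μ.map e) (ν.map e) e.symm.measurable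

lemma klDiv_prod (μ₁ ν₁ : Measure X) (μ₂ ν₂ : Measure Y) [IsProbabilityMeasure μ₁]
    [IsFiniteMeasure ν₁] [IsProbabilityMeasure μ₂] [IsProbabilityMeasure ν₂] :
    InformationTheory.klDiv (μ₁.prod μ₂) (ν₁.prod ν₂) =
      InformationTheory.klDiv μ₁ ν₁ + InformationTheory.klDiv μ₂ ν₂ := by
  have hswap : InformationTheory.klDiv (μ₁.prod μ₂) (μ₁.prod ν₂) =
      InformationTheory.klDiv (μ₂.prod μ₁) (ν₂.prod μ₁) := by
    rw [← klDiv_map_measurableEquiv _ _ MeasurableEquiv.prodComm]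
    exact congrArg₂ _ Measure.prod_swap Measure.prod_swap
  simp only [← Measure.compProd_const] at hswap ⊢
  rw [InformationTheory.klDiv_compProd_eq_add, hswap, InformationTheory.klDiv_compProd_left]

lemma klDiv_eq_ofReal_integral {μ : Measure X} (ν : Measure X) [IsProbabilityMeasure μ]
    [IsProbabilityMeasure ν] {g : X → ℝ} (hg : Measurable g)
    (hμ : μ = ν.withDensity fun x => ENNReal.ofReal (exp (g x))) (hint : Integrable g μ) :
    InformationTheory.klDiv μ ν = ENNReal.ofReal (∫ x, g x ∂μ) := by
  have hac : μ ≪ ν := hμ ▸ withDensity_absolutelyContinuous _ _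
  have hllr : llr μ ν =ᵐ[μ] g := by
    filter_upwards [hac.ae_le (Measure.rnDeriv_withDensity ν hg.exp.ennreal_ofReal)] with x hx
    rw [llr, hμ, hx, ENNReal.toReal_ofReal (exp_pos _).le, log_exp]
  rw [InformationTheory.klDiv_of_ac_of_integrable hac (hint.congr hllr.symm),
    integral_congr_ae hllr, probReal_univ, probReal_univ, add_sub_cancel_right]

lemma rnDeriv_compProd_right [MeasurableSpace.CountableOrCountablyGenerated X Y]
    (μ : Measure X) [IsFiniteMeasure μ] (κ η : Kernel X Y) [IsFiniteKernel κ] [IsFiniteKernel η]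
    (hac : ∀ᵐ x ∂μ, κ x ≪ η x) :
    (μ ⊗ₘ κ).rnDeriv (μ ⊗ₘ η) =ᵐ[μ ⊗ₘ η] fun p => κ.rnDeriv η p.1 p.2 := by
  have hdens : μ ⊗ₘ κ = (μ ⊗ₘ η).withDensity fun p => κ.rnDeriv η p.1 p.2 := by
    rw [← Measure.compProd_withDensity (κ.measurable_rnDeriv η)]
    refine Measure.compProd_congr ?_
    filter_upwards [hac] with x hx
    exact (Kernel.withDensity_rnDeriv_eq hx).symm
  rw [hdens]
  exact Measure.rnDeriv_withDensity _ (κ.measurable_rnDeriv η)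

lemma klDiv_compProd_right [MeasurableSpace.CountableOrCountablyGenerated X Y]
    (μ : Measure X) [IsFiniteMeasure μ] (κ η : Kernel X Y) [IsFiniteKernel κ] [IsFiniteKernel η]
    (hac : ∀ᵐ x ∂μ, κ x ≪ η x) :
    InformationTheory.klDiv (μ ⊗ₘ κ) (μ ⊗ₘ η) =
      ∫⁻ x, InformationTheory.klDiv (κ x) (η x) ∂μ := by
  have hderiv := rnDeriv_compProd_right μ κ η hac
  rw [InformationTheory.klDiv_eq_lintegral_klFun_of_ac
    (Measure.AbsolutelyContinuous.compProd_right hac)]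
  calc ∫⁻ p, ENNReal.ofReal (InformationTheory.klFun ((μ ⊗ₘ κ).rnDeriv (μ ⊗ₘ η) p).toReal)
        ∂(μ ⊗ₘ η)
      = ∫⁻ p, ENNReal.ofReal (InformationTheory.klFun (κ.rnDeriv η p.1 p.2).toReal)
          ∂(μ ⊗ₘ η) := by
        refine lintegral_congr_ae ?_
        filter_upwards [hderiv] with p hp
        rw [hp]
    _ = ∫⁻ x, ∫⁻ y, ENNReal.ofReal (InformationTheory.klFun (κ.rnDeriv η x y).toReal)
          ∂(η x) ∂μ :=
        Measure.lintegral_compProd (by fun_prop)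
    _ = ∫⁻ x, InformationTheory.klDiv (κ x) (η x) ∂μ := by
        refine lintegral_congr_ae ?_
        filter_upwards [hac] with x hx
        rw [InformationTheory.klDiv_eq_lintegral_klFun_of_ac hx]
        refine lintegral_congr_ae ?_
        filter_upwards [Kernel.rnDeriv_eq_rnDeriv_measure (κ := κ) (η := η) (a := x)] with y hy
        rw [hy]

end KullbackLeibler

section GaussianCauchy

lemma integrable_log_of_le {X : Type*} [MeasurableSpace X] {μ : Measure X} [IsFiniteMeasure μ]
    {f : X → ℝ} {c : ℝ} (hc : 0 < c) (hf : ∀ᵐ x ∂μ, c ≤ f x) (hint : Integrable f μ) :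
    Integrable (fun x => log (f x)) μ := by
  refine (hint.abs.add (integrable_const |log c|)).mono'
    (measurable_log.comp_aemeasurable hint.aemeasurable).aestronglyMeasurable ?_
  filter_upwards [hf] with x hx
  have hlower : log c ≤ log (f x) := log_le_log hc hx
  have hupper : log (f x) ≤ f x - 1 := log_le_sub_one_of_pos (hc.trans_le hx)
  have hlog_c : -|log c| ≤ log c := neg_abs_le _
  have hf_abs : f x ≤ |f x| := le_abs_self _
  rw [Real.norm_eq_abs, Pi.add_apply, abs_le]
  constructor <;> linarith [abs_nonneg (f x), abs_nonneg (log c)]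

lemma integral_log_le_log_integral {X : Type*} [MeasurableSpace X] {μ : Measure X}
    [IsProbabilityMeasure μ] {f : X → ℝ} {c : ℝ} (hc : 0 < c) (hf : ∀ᵐ x ∂μ, c ≤ f x)
    (hint : Integrable f μ) : ∫ x, log (f x) ∂μ ≤ log (∫ x, f x ∂μ) := by
  have hsubset : Set.Ici c ⊆ Set.Ioi 0 := Set.Ici_subset_Ioi.2 hc
  exact (strictConcaveOn_log_Ioi.concaveOn.subset hsubset (convex_Ici c)).le_map_integral
    (continuousOn_log.mono fun x hx => (hsubset hx).ne') isClosed_Ici hf hint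
    (integrable_log_of_le hc hf hint)

lemma integrable_sq_gaussianReal (m : ℝ) (v : NNReal) :
    Integrable (fun x => x ^ 2) (gaussianReal m v) :=
  (memLp_id_gaussianReal 2).integrable_sq

lemma integral_sub_sq_gaussianReal (m : ℝ) (v : NNReal) :
    ∫ x, (x - m) ^ 2 ∂gaussianReal m v = v := by
  simpa only [variance_eq_integral aemeasurable_id', integral_id_gaussianReal] using
    variance_fun_id_gaussianReal (μ := m) (v := v)

lemma integrable_sub_sq_gaussianReal (m : ℝ) (v : NNReal) :
    Integrable (fun x => (x - m) ^ 2) (gaussianReal m v) :=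
  ((memLp_id_gaussianReal 2).sub (memLp_const m)).integrable_sq

lemma integral_sq_gaussianReal (m : ℝ) (v : NNReal) :
    ∫ x, x ^ 2 ∂gaussianReal m v = m ^ 2 + v := by
  have hvar := variance_eq_sub (memLp_id_gaussianReal (μ := m) (v := v) 2)
  simp only [variance_id_gaussianReal, Pi.pow_apply, id, integral_id_gaussianReal] at hvar
  linarith

lemma cauchyScale_eq_cauchyMeasure {σ : ℝ} (hσ : 0 < σ) :
    cauchyScale σ = cauchyMeasure 0 σ.toNNReal := by
  rw [cauchyMeasure_of_scale_ne_zero 0 (toNNReal_pos.2 hσ).ne', cauchyScale]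
  congr 1 with α
  rw [cauchyPDF, cauchyPDFReal_def', NNReal.coe_inv, coe_toNNReal _ hσ.le, sub_zero, div_pow,
    one_div, mul_inv, mul_inv]
  ring_nf

lemma isProbabilityMeasure_cauchyScale {σ : ℝ} (hσ : 0 < σ) :
    IsProbabilityMeasure (cauchyScale σ) := by
  rw [cauchyScale_eq_cauchyMeasure hσ]
  infer_instance

/-- The logarithm of the density of `N(a, σ²)` with respect to the Cauchy distribution of
scale `σ > 0`, with the normalizing constants collected in `log (π / 2) / 2`. -/
noncomputable def gaussianCauchyLLR (a σ α : ℝ) : ℝ :=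
  log (1 + α ^ 2 / σ ^ 2) + log (π / 2) / 2 - (α - a) ^ 2 / (2 * σ ^ 2)

lemma measurable_gaussianCauchyLLR (a σ : ℝ) : Measurable (gaussianCauchyLLR a σ) := by
  unfold gaussianCauchyLLR
  fun_prop

lemma exp_gaussianCauchyLLR (a σ α : ℝ) :
    exp (gaussianCauchyLLR a σ α) =
      (1 + α ^ 2 / σ ^ 2) * √(π / 2) * exp (-(α - a) ^ 2 / (2 * σ ^ 2)) := by
  rw [gaussianCauchyLLR, sub_eq_add_neg, exp_add, exp_add, exp_log (by positivity), exp_half,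
    exp_log (by positivity), neg_div]

lemma gaussianReal_eq_withDensity_cauchyScale (a : ℝ) {σ : ℝ} (hσ : 0 < σ) :
    gaussianReal a (σ ^ 2).toNNReal = (cauchyScale σ).withDensity
      fun α => ENNReal.ofReal (exp (gaussianCauchyLLR a σ α)) := by
  have hvar : (σ ^ 2).toNNReal ≠ 0 := (toNNReal_pos.2 (by positivity)).ne'
  have hsqrt : √(2 * π * σ ^ 2) = 2 * σ * √(π / 2) := by
    rw [show 2 * π * σ ^ 2 = (2 * σ) ^ 2 * (π / 2) by ring, sqrt_mul (by positivity),
      sqrt_sq (by positivity)]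
  have hpi : √(π / 2) * √(π / 2) = π / 2 := mul_self_sqrt (by positivity)
  rw [gaussianReal_of_var_ne_zero _ hvar, cauchyScale, ← withDensity_mul _ (by fun_prop)
    (measurable_gaussianCauchyLLR a σ).exp.ennreal_ofReal]
  congr 1 with α
  rw [Pi.mul_apply, ← ENNReal.ofReal_mul (by positivity), gaussianPDF, gaussianPDFReal,
    exp_gaussianCauchyLLR, coe_toNNReal _ (by positivity), hsqrt]
  congr 1
  field_simp
  linarith

lemma integrable_one_add_sq_div_gaussianReal (a σ : ℝ) (v : NNReal) :
    Integrable (fun α => 1 + α ^ 2 / σ ^ 2) (gaussianReal a v) :=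
  (integrable_const 1).add ((integrable_sq_gaussianReal a v).div_const _)

lemma one_le_one_add_sq_div (α σ : ℝ) : 1 ≤ 1 + α ^ 2 / σ ^ 2 :=
  le_add_of_nonneg_right (by positivity)

lemma integrable_log_one_add_sq_div_gaussianReal (a σ : ℝ) (v : NNReal) :
    Integrable (fun α => log (1 + α ^ 2 / σ ^ 2)) (gaussianReal a v) :=
  integrable_log_of_le one_pos (ae_of_all _ fun α => one_le_one_add_sq_div α σ)
    (integrable_one_add_sq_div_gaussianReal a σ v)

lemma integral_log_one_add_sq_div_gaussianReal_le (a σ : ℝ) (v : NNReal) :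
    ∫ α, log (1 + α ^ 2 / σ ^ 2) ∂gaussianReal a v ≤ log (1 + (a ^ 2 + v) / σ ^ 2) := by
  refine (integral_log_le_log_integral one_pos (ae_of_all _ fun α => one_le_one_add_sq_div α σ)
    (integrable_one_add_sq_div_gaussianReal a σ v)).trans_eq ?_
  rw [integral_add (integrable_const 1) ((integrable_sq_gaussianReal a v).div_const _),
    integral_const, probReal_univ, one_smul, integral_div, integral_sq_gaussianReal]

lemma integrable_gaussianCauchyLLR (a σ : ℝ) (v : NNReal) :
    Integrable (gaussianCauchyLLR a σ) (gaussianReal a v) :=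
  ((integrable_log_one_add_sq_div_gaussianReal a σ v).add (integrable_const _)).sub
    ((integrable_sub_sq_gaussianReal a v).div_const _)

lemma integral_gaussianCauchyLLR_le (a : ℝ) {σ : ℝ} (hσ : 0 < σ) :
    ∫ α, gaussianCauchyLLR a σ α ∂gaussianReal a (σ ^ 2).toNNReal ≤ log (2 + a ^ 2 / σ ^ 2) := by
  have hlog := integrable_log_one_add_sq_div_gaussianReal a σ (σ ^ 2).toNNReal
  have hlog_le := integral_log_one_add_sq_div_gaussianReal_le a σ (σ ^ 2).toNNReal
  have hsum : Integrable (fun α => log (1 + α ^ 2 / σ ^ 2) + log (π / 2) / 2)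
      (gaussianReal a (σ ^ 2).toNNReal) := hlog.add (integrable_const _)
  have hsq := (integrable_sub_sq_gaussianReal a (σ ^ 2).toNNReal).div_const (2 * σ ^ 2)
  have hlog_half_pi : log (π / 2) ≤ 1 := by
    linarith [log_le_sub_one_of_pos (half_pos pi_pos), pi_le_four]
  unfold gaussianCauchyLLR
  rw [integral_sub hsum hsq, integral_add hlog (integrable_const _),
    integral_const, probReal_univ, one_smul, integral_div, integral_sub_sq_gaussianReal]
  rw [coe_toNNReal _ (by positivity)] at hlog_le ⊢
  rw [show 1 + (a ^ 2 + σ ^ 2) / σ ^ 2 = 2 + a ^ 2 / σ ^ 2 by field_simp; ring] at hlog_le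
  have hhalf : σ ^ 2 / (2 * σ ^ 2) = 1 / 2 := by field_simp
  linarith

lemma klDiv_gaussianReal_cauchyScale_le (a : ℝ) {σ : ℝ} (hσ : 0 < σ) :
    InformationTheory.klDiv (gaussianReal a (σ ^ 2).toNNReal) (cauchyScale σ) ≤
      ENNReal.ofReal (log (2 + a ^ 2 / σ ^ 2)) := by
  have := isProbabilityMeasure_cauchyScale hσ
  rw [klDiv_eq_ofReal_integral _ (measurable_gaussianCauchyLLR a σ)
    (gaussianReal_eq_withDensity_cauchyScale a hσ) (integrable_gaussianCauchyLLR a σ _)]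
  exact ENNReal.ofReal_le_ofReal (integral_gaussianCauchyLLR_le a hσ)

end GaussianCauchy

section ProductDensity

variable {ι : Type*} {X : ι → Type*} [∀ i, MeasurableSpace (X i)]
  {μ : ∀ i, Measure (X i)} [∀ i, SigmaFinite (μ i)] {f : ∀ i, X i → ENNReal}

lemma lmarginal_prod_eq_prod_lintegral (hf : ∀ i, Measurable (f i)) (s : Finset ι) :
    lmarginal μ s (fun x => ∏ i ∈ s, f i (x i)) = fun _ => ∏ i ∈ s, ∫⁻ y, f i y ∂μ i := by
  induction s using Finset.induction with
  | empty => simp only [lmarginal_empty, Finset.prod_empty]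
  | insert j s hj ih =>
    have hmeas : ∀ t : Finset ι, Measurable fun x : ∀ i, X i => ∏ i ∈ t, f i (x i) := fun t =>
      Finset.measurable_prod _ fun i _ => (hf i).comp (measurable_pi_apply i)
    have hpeel : ∀ x : ∀ i, X i, ∫⁻ y, ∏ i ∈ insert j s, f i (Function.update x j y i) ∂μ j =
        (∫⁻ y, f j y ∂μ j) * ∏ i ∈ s, f i (x i) := by
      intro x
      rw [← lintegral_mul_const _ (hf j)]
      refine lintegral_congr fun y => ?_
      rw [Finset.prod_insert hj, Function.update_self]
      congr 1
      exact Finset.prod_congr rfl fun i hi => by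
        rw [Function.update_of_ne (ne_of_mem_of_not_mem hi hj)]
    rw [lmarginal_insert' _ (hmeas _) hj]
    simp only [hpeel]
    funext x
    have hmeas_update : Measurable fun y : ∀ i : s, X i =>
        ∏ i ∈ s, f i (Function.updateFinset x s y i) := (hmeas s).comp measurable_updateFinset
    rw [lmarginal, lintegral_const_mul _ hmeas_update, Finset.prod_insert hj]
    exact congrArg _ (congrFun ih x)

variable [Fintype ι]

lemma lintegral_pi_prod_eq_prod (hf : ∀ i, Measurable (f i)) :
    ∫⁻ x, ∏ i, f i (x i) ∂Measure.pi μ = ∏ i, ∫⁻ y, f i y ∂μ i := by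
  rcases isEmpty_or_nonempty (∀ i, X i) with hempty | ⟨⟨x⟩⟩
  · obtain ⟨i, hi⟩ := isEmpty_pi.1 hempty
    rw [lintegral_of_isEmpty, Finset.prod_eq_zero (Finset.mem_univ i) (lintegral_of_isEmpty _ _)]
  · rw [lintegral_eq_lmarginal_univ x, lmarginal_prod_eq_prod_lintegral hf]

lemma pi_withDensity [∀ i, SigmaFinite ((μ i).withDensity (f i))]
    (hf : ∀ i, Measurable (f i)) :
    Measure.pi (fun i => (μ i).withDensity (f i)) =
      (Measure.pi μ).withDensity fun x => ∏ i, f i (x i) := by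
  refine Measure.pi_eq fun s hs => ?_
  have hindicator : ∀ x : ∀ i, X i, (Set.univ.pi s).indicator (fun x => ∏ i, f i (x i)) x =
      ∏ i, (s i).indicator (f i) (x i) := by
    intro x
    by_cases hx : x ∈ Set.univ.pi s
    · rw [Set.indicator_of_mem hx]
      exact Finset.prod_congr rfl fun i _ => (Set.indicator_of_mem (hx i trivial) _).symm
    · obtain ⟨i, hi⟩ : ∃ i, x i ∉ s i := by simpa only [Set.mem_univ_pi, not_forall] using hx
      rw [Set.indicator_of_notMem hx,
        Finset.prod_eq_zero (Finset.mem_univ i) (Set.indicator_of_notMem hi _)]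
  simp only [withDensity_apply _ (MeasurableSet.univ_pi hs), withDensity_apply _ (hs _),
    ← lintegral_indicator (MeasurableSet.univ_pi hs), ← lintegral_indicator (hs _), hindicator]
  exact lintegral_pi_prod_eq_prod fun i => (hf i).indicator (hs i)

end ProductDensity

section GaussMV

variable {d : ℕ}

lemma withDensity_comp_map {X Y : Type*} [MeasurableSpace X] [MeasurableSpace Y] (μ : Measure X)
    {e : X → Y} (he : Measurable e) {f : Y → ENNReal} (hf : Measurable f) :
    (μ.withDensity (f ∘ e)).map e = (μ.map e).withDensity f := by
  ext s hs
  rw [Measure.map_apply he hs, withDensity_apply _ (he hs), withDensity_apply _ hs,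
    setLIntegral_map hs hf he]
  rfl

lemma map_add_mulVec_volume_pi {ι : Type*} [Fintype ι] [DecidableEq ι] (m : ι → ℝ)
    {A : Matrix ι ι ℝ} (hA : A.det ≠ 0) :
    (volume : Measure (ι → ℝ)).map (fun z => m + A *ᵥ z) =
      ENNReal.ofReal |A.det⁻¹| • (volume : Measure (ι → ℝ)) := by
  have hlin : (volume : Measure (ι → ℝ)).map (A *ᵥ ·) =
      ENNReal.ofReal |A.det⁻¹| • (volume : Measure (ι → ℝ)) :=
    map_matrix_volume_pi_eq_smul_volume_pi hA
  have hmeas : Measurable (A *ᵥ · : (ι → ℝ) → ι → ℝ) := by fun_prop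
  rw [← Function.comp_def (m + ·) (A *ᵥ ·), ← Measure.map_map (measurable_const_add m) hmeas, hlin,
    Measure.map_smul, map_add_left_eq_self]

/-- The real-valued Lebesgue density of `gaussMV d m C`. -/
noncomputable def gaussMVPDFReal (m : Fin d → ℝ) (C : Matrix (Fin d) (Fin d) ℝ)
    (h : Fin d → ℝ) : ℝ :=
  ((2 * π) ^ d * C.det) ^ (-(1 : ℝ) / 2) * exp (-((h - m) ⬝ᵥ C⁻¹ *ᵥ (h - m)) / 2)

lemma gaussMV_eq_withDensity (m : Fin d → ℝ) (C : Matrix (Fin d) (Fin d) ℝ) :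
    gaussMV d m C = volume.withDensity fun h => ENNReal.ofReal (gaussMVPDFReal m C h) :=
  rfl

lemma measurable_gaussMVPDFReal (m : Fin d → ℝ) (C : Matrix (Fin d) (Fin d) ℝ) :
    Measurable (gaussMVPDFReal m C) := by
  unfold gaussMVPDFReal
  fun_prop

lemma prod_gaussianPDFReal_zero_one (z : Fin d → ℝ) :
    ∏ i, gaussianPDFReal 0 1 (z i) = gaussMVPDFReal 0 1 z := by
  have hconst : ((√(2 * π))⁻¹) ^ d = ((2 * π) ^ d) ^ (-(1 : ℝ) / 2) := by
    rw [neg_div, rpow_neg (by positivity), ← sqrt_eq_rpow, inv_pow, sqrt_eq_rpow, sqrt_eq_rpow,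
      ← rpow_mul_natCast (by positivity), ← rpow_natCast_mul (by positivity),
      mul_comm (d : ℝ)]
  simp only [gaussianPDFReal, gaussMVPDFReal, NNReal.coe_one, mul_one, sub_zero, det_one, inv_one,
    one_mulVec]
  rw [Finset.prod_mul_distrib, ← exp_sum, Finset.prod_const, Finset.card_fin, hconst,
    ← Finset.sum_div, Finset.sum_neg_distrib, dotProduct]
  simp only [sq]

lemma pi_gaussianReal_eq_gaussMV :
    Measure.pi (fun _ : Fin d => gaussianReal 0 1) = gaussMV d 0 1 := by
  have : SigmaFinite ((volume : Measure ℝ).withDensity (gaussianPDF 0 1)) := by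
    rw [← gaussianReal_of_var_ne_zero 0 one_ne_zero]
    infer_instance
  simp only [gaussianReal_of_var_ne_zero 0 one_ne_zero]
  rw [pi_withDensity fun _ => measurable_gaussianPDF 0 1, gaussMV_eq_withDensity, ← volume_pi]
  congr 1 with z
  rw [← prod_gaussianPDFReal_zero_one, ENNReal.ofReal_prod_of_nonneg fun i _ =>
    gaussianPDFReal_nonneg 0 1 (z i)]
  rfl

lemma dotProduct_inv_mul_transpose_mulVec {ι : Type*} [Fintype ι] [DecidableEq ι]
    {A : Matrix ι ι ℝ} (hA : A.det ≠ 0) (z : ι → ℝ) :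
    (A *ᵥ z) ⬝ᵥ (A * Aᵀ)⁻¹ *ᵥ (A *ᵥ z) = z ⬝ᵥ z := by
  have hunit : IsUnit A.det := hA.isUnit
  rw [mulVec_mulVec, Matrix.mul_inv_rev, Matrix.mul_assoc, nonsing_inv_mul _ hunit, Matrix.mul_one,
    dotProduct_mulVec, ← transpose_nonsing_inv, vecMul_transpose, mulVec_mulVec,
    nonsing_inv_mul _ hunit, one_mulVec]

lemma abs_det_mul_gaussMVPDFReal (m : Fin d → ℝ) {A : Matrix (Fin d) (Fin d) ℝ} (hA : A.det ≠ 0)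
    (z : Fin d → ℝ) :
    |A.det| * gaussMVPDFReal m (A * Aᵀ) (m + A *ᵥ z) = gaussMVPDFReal 0 1 z := by
  have hdet : |A.det| ≠ 0 := abs_ne_zero.2 hA
  have hconst : ((2 * π) ^ d * (A * Aᵀ).det) ^ (-(1 : ℝ) / 2) =
      |A.det|⁻¹ * ((2 * π) ^ d) ^ (-(1 : ℝ) / 2) := by
    rw [det_mul, det_transpose, mul_rpow (by positivity) (mul_self_nonneg _), mul_comm, neg_div,
      rpow_neg (mul_self_nonneg _), ← sqrt_eq_rpow, sqrt_mul_self_eq_abs]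
  simp only [gaussMVPDFReal, add_sub_cancel_left, dotProduct_inv_mul_transpose_mulVec hA, hconst,
    sub_zero, det_one, inv_one, one_mulVec, mul_one]
  rw [mul_assoc, mul_inv_cancel_left₀ hdet]

lemma map_gaussMV_add_mulVec (m : Fin d → ℝ) {A : Matrix (Fin d) (Fin d) ℝ} (hA : A.det ≠ 0) :
    (gaussMV d 0 1).map (fun z => m + A *ᵥ z) = gaussMV d m (A * Aᵀ) := by
  set pdf : (Fin d → ℝ) → ENNReal := fun h => ENNReal.ofReal (gaussMVPDFReal m (A * Aᵀ) h)
  have hpdf : Measurable pdf := (measurable_gaussMVPDFReal m _).ennreal_ofReal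
  have hmeas : Measurable fun z : Fin d → ℝ => m + A *ᵥ z := by fun_prop
  have hdet : ENNReal.ofReal |A.det| * ENNReal.ofReal |A.det⁻¹| = 1 := by
    rw [← ENNReal.ofReal_mul (abs_nonneg _), ← abs_mul, mul_inv_cancel₀ hA, abs_one,
      ENNReal.ofReal_one]
  have hstd : gaussMV d 0 1 = ENNReal.ofReal |A.det| •
      volume.withDensity (pdf ∘ fun z => m + A *ᵥ z) := by
    rw [gaussMV_eq_withDensity, ← withDensity_smul _ (hpdf.comp hmeas)]
    congr 1 with z
    rw [← abs_det_mul_gaussMVPDFReal m hA, ENNReal.ofReal_mul (abs_nonneg _)]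
    rfl
  rw [hstd, Measure.map_smul, withDensity_comp_map _ hmeas hpdf, map_add_mulVec_volume_pi m hA,
    withDensity_smul_measure, smul_smul, hdet, one_smul]
  rfl

open scoped MatrixOrder in
lemma gaussMV_eq_map_multivariateGaussian (m : Fin d → ℝ) {C : Matrix (Fin d) (Fin d) ℝ}
    (hC : C.PosDef) :
    gaussMV d m C = (multivariateGaussian (WithLp.toLp 2 m) C).map WithLp.ofLp := by
  set A := CFC.sqrt C
  have hAA : A * A = C := CFC.sqrt_mul_sqrt_self C hC.posSemidef.nonneg
  have hAT : Aᵀ = A := (CFC.sqrt_nonneg C).isSelfAdjoint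
  have hA : A.det ≠ 0 := fun h => hC.det_pos.ne' (by rw [← hAA, det_mul, h, zero_mul])
  have hmeas : Measurable fun x : EuclideanSpace ℝ (Fin d) =>
    WithLp.toLp 2 m + toEuclideanCLM (𝕜 := ℝ) A x := by fun_prop
  rw [multivariateGaussian, ← map_pi_eq_stdGaussian, pi_gaussianReal_eq_gaussMV,
    Measure.map_map hmeas (by fun_prop), Measure.map_map (by fun_prop) (by fun_prop), ← hAA]
  nth_rewrite 2 [← hAT]
  rw [← map_gaussMV_add_mulVec m hA]
  rfl

lemma isGaussian_gaussMV (m : Fin d → ℝ) {C : Matrix (Fin d) (Fin d) ℝ} (hC : C.PosDef) :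
    IsGaussian (gaussMV d m C) := by
  rw [gaussMV_eq_map_multivariateGaussian m hC]
  exact isGaussian_map_equiv (EuclideanSpace.equiv (Fin d) ℝ)

lemma integral_id_gaussMV (m : Fin d → ℝ) {C : Matrix (Fin d) (Fin d) ℝ} (hC : C.PosDef) :
    ∫ h, h ∂gaussMV d m C = m := by
  rw [gaussMV_eq_map_multivariateGaussian m hC, integral_map (by fun_prop) (by fun_prop)]
  exact ((EuclideanSpace.equiv (Fin d) ℝ).toContinuousLinearMap.integral_comp_id_comm
    IsGaussian.integrable_id).trans (by rw [integral_id_multivariateGaussian]; rfl)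

lemma integrable_dotProduct_gaussMV (w m : Fin d → ℝ) {C : Matrix (Fin d) (Fin d) ℝ}
    (hC : C.PosDef) : Integrable (fun h => w ⬝ᵥ h) (gaussMV d m C) :=
  have := isGaussian_gaussMV m hC
  (LinearMap.toContinuousLinearMap (dotProductBilin ℝ ℝ w)).integrable_comp
    IsGaussian.integrable_fun_id

lemma integral_dotProduct_gaussMV (w m : Fin d → ℝ) {C : Matrix (Fin d) (Fin d) ℝ}
    (hC : C.PosDef) : ∫ h, w ⬝ᵥ h ∂gaussMV d m C = w ⬝ᵥ m := by
  have := isGaussian_gaussMV m hC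
  have hcomm := (LinearMap.toContinuousLinearMap (dotProductBilin ℝ ℝ w)).integral_comp_comm
    (IsGaussian.integrable_fun_id (μ := gaussMV d m C))
  rwa [integral_id_gaussMV m hC] at hcomm

/-- The logarithm of the density of `N(m, C)` with respect to `N(0, C)`, for symmetric invertible
`C`; it is affine in `h` because the quadratic terms of the two densities cancel. -/
noncomputable def gaussMVShiftLLR (m : Fin d → ℝ) (C : Matrix (Fin d) (Fin d) ℝ)
    (h : Fin d → ℝ) : ℝ :=
  m ⬝ᵥ C⁻¹ *ᵥ h - m ⬝ᵥ C⁻¹ *ᵥ m / 2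

lemma measurable_gaussMVShiftLLR (m : Fin d → ℝ) (C : Matrix (Fin d) (Fin d) ℝ) :
    Measurable (gaussMVShiftLLR m C) := by
  unfold gaussMVShiftLLR
  fun_prop

lemma gaussMVPDFReal_eq_mul_exp (m : Fin d → ℝ) {C : Matrix (Fin d) (Fin d) ℝ}
    (hC : C.IsSymm) (h : Fin d → ℝ) :
    gaussMVPDFReal m C h = gaussMVPDFReal 0 C h * exp (gaussMVShiftLLR m C h) := by
  have hsymm : h ⬝ᵥ C⁻¹ *ᵥ m = m ⬝ᵥ C⁻¹ *ᵥ h := by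
    rw [dotProduct_mulVec, ← mulVec_transpose, transpose_nonsing_inv, hC.eq, dotProduct_comm]
  rw [gaussMVPDFReal, gaussMVPDFReal, mul_assoc, ← exp_add, gaussMVShiftLLR]
  congr 2
  simp only [sub_zero, sub_dotProduct, dotProduct_sub, mulVec_sub, hsymm]
  ring

lemma gaussMV_eq_withDensity_gaussMV_zero (m : Fin d → ℝ) {C : Matrix (Fin d) (Fin d) ℝ}
    (hC : C.IsSymm) :
    gaussMV d m C =
      (gaussMV d 0 C).withDensity fun h => ENNReal.ofReal (exp (gaussMVShiftLLR m C h)) := by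
  rw [gaussMV_eq_withDensity, gaussMV_eq_withDensity, ← withDensity_mul _
    (measurable_gaussMVPDFReal 0 C).ennreal_ofReal
    (measurable_gaussMVShiftLLR m C).exp.ennreal_ofReal]
  congr 1 with h
  rw [gaussMVPDFReal_eq_mul_exp m hC, ENNReal.ofReal_mul' (exp_pos _).le]
  rfl

lemma integrable_gaussMVShiftLLR (m : Fin d → ℝ) {C : Matrix (Fin d) (Fin d) ℝ}
    (hC : C.PosDef) : Integrable (gaussMVShiftLLR m C) (gaussMV d m C) := by
  have := isGaussian_gaussMV m hC
  unfold gaussMVShiftLLR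
  simp only [dotProduct_mulVec]
  exact (integrable_dotProduct_gaussMV (m ᵥ* C⁻¹) m hC).sub (integrable_const _)

lemma integral_gaussMVShiftLLR (m : Fin d → ℝ) {C : Matrix (Fin d) (Fin d) ℝ}
    (hC : C.PosDef) :
    ∫ h, gaussMVShiftLLR m C h ∂gaussMV d m C = m ⬝ᵥ C⁻¹ *ᵥ m / 2 := by
  have := isGaussian_gaussMV m hC
  simp only [gaussMVShiftLLR, dotProduct_mulVec]
  rw [integral_sub (integrable_dotProduct_gaussMV _ m hC) (integrable_const _),
    integral_dotProduct_gaussMV _ m hC, integral_const, probReal_univ, one_smul, sub_half]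

lemma klDiv_gaussMV_gaussMV_zero (m : Fin d → ℝ) {C : Matrix (Fin d) (Fin d) ℝ}
    (hC : C.PosDef) :
    InformationTheory.klDiv (gaussMV d m C) (gaussMV d 0 C) =
      ENNReal.ofReal (m ⬝ᵥ C⁻¹ *ᵥ m / 2) := by
  have := isGaussian_gaussMV m hC
  have := isGaussian_gaussMV 0 hC
  rw [klDiv_eq_ofReal_integral _ (measurable_gaussMVShiftLLR m C)
    (gaussMV_eq_withDensity_gaussMV_zero m (isHermitian_iff_isSymm.1 hC.isHermitian))
    (integrable_gaussMVShiftLLR m hC), integral_gaussMVShiftLLR m hC]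

end GaussMV

section Transportation

lemma integrable_exp_neg_gaussianReal (a : ℝ) (v : NNReal) :
    Integrable (fun α => exp (-α)) (gaussianReal a v) := by
  simpa only [neg_one_mul] using integrable_exp_mul_gaussianReal (μ := a) (v := v) (-1)

lemma integral_exp_neg_gaussianReal (a : ℝ) (v : NNReal) :
    ∫ α, exp (-α) ∂gaussianReal a v = exp (-a + v / 2) := by
  have hmgf := congrFun (mgf_fun_id_gaussianReal (μ := a) (v := v)) (-1)
  simpa only [mgf, neg_one_mul, mul_neg_one, neg_one_sq, mul_one] using hmgf

lemma lintegral_exp_neg_mul_gaussianReal_prod {F : Type*} [MeasurableSpace F] (Q : Measure F)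
    [SFinite Q] (a : ℝ) (v : NNReal) {s : F → ℝ} (hs : ∀ f, 0 ≤ s f) (hint : Integrable s Q) :
    ∫⁻ p, ENNReal.ofReal (exp (-p.1) * s p.2 / 2) ∂(gaussianReal a v).prod Q =
      ENNReal.ofReal ((∫ f, s f ∂Q) / (2 * exp (a - v / 2))) := by
  have hprod := ((integrable_exp_neg_gaussianReal a v).mul_prod hint).div_const 2
  have hnonneg : ∀ p : ℝ × F, 0 ≤ exp (-p.1) * s p.2 / 2 := fun p =>
    div_nonneg (mul_nonneg (exp_pos _).le (hs p.2)) zero_le_two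
  rw [← ofReal_integral_eq_lintegral_ofReal hprod (ae_of_all _ hnonneg), integral_div,
    integral_prod_mul (fun α : ℝ => exp (-α)) s, integral_exp_neg_gaussianReal,
    show -a + (v : ℝ) / 2 = -(a - v / 2) by ring, exp_neg]
  congr 1
  field_simp

lemma inv_exp_smul {ι : Type*} [Fintype ι] [DecidableEq ι] (α : ℝ) {S : Matrix ι ι ℝ}
    (hS : IsUnit S.det) : (exp α • S)⁻¹ = exp (-α) • S⁻¹ := by
  rw [exp_neg]
  exact Matrix.inv_smul' S (Units.mk0 (exp α) (exp_ne_zero α)) hS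

lemma klDiv_gaussMV_exp_smul {d : ℕ} (m : Fin d → ℝ) {S : Matrix (Fin d) (Fin d) ℝ}
    (hS : S.PosDef) (α : ℝ) :
    InformationTheory.klDiv (gaussMV d m (exp α • S)) (gaussMV d 0 (exp α • S)) =
      ENNReal.ofReal (exp (-α) * (m ⬝ᵥ S⁻¹ *ᵥ m) / 2) := by
  rw [klDiv_gaussMV_gaussMV_zero m (hS.smul (exp_pos α)), inv_exp_smul α hS.det_pos.ne'.isUnit,
    smul_mulVec, dotProduct_smul, smul_eq_mul]

lemma bind_map_prodMk_eq_map_compProd {X Y Z : Type*} [MeasurableSpace X] [MeasurableSpace Y]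
    [MeasurableSpace Z] (μ : Measure (X × Y)) [SFinite μ] (κ : Kernel (X × Y) Z)
    [IsSFiniteKernel κ] :
    (μ.bind fun p => (κ p).map fun z => (p.1, p.2, z)) =
      (μ ⊗ₘ κ).map MeasurableEquiv.prodAssoc := by
  rw [Measure.compProd_eq_comp_prod, Measure.map_comp _ _ MeasurableEquiv.prodAssoc.measurable]
  congr 1
  funext p
  rw [Kernel.map_apply _ MeasurableEquiv.prodAssoc.measurable, Kernel.prod_apply, Kernel.id_apply,
    Measure.dirac_prod, Measure.map_map MeasurableEquiv.prodAssoc.measurable (by fun_prop)]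
  rfl

lemma klDiv_bind_map_prodMk {X Y Z : Type*} [MeasurableSpace X] [MeasurableSpace Y]
    [MeasurableSpace Z] (μ ν : Measure (X × Y)) [IsProbabilityMeasure μ] [IsProbabilityMeasure ν]
    (κ η : Kernel (X × Y) Z) [IsMarkovKernel κ] [IsMarkovKernel η] :
    klDiv (μ.bind fun p => (κ p).map fun z => (p.1, p.2, z))
        (ν.bind fun p => (η p).map fun z => (p.1, p.2, z)) =
      InformationTheory.klDiv (μ ⊗ₘ κ) (ν ⊗ₘ η) := by
  have hassoc : Measurable (MeasurableEquiv.prodAssoc : (X × Y) × Z ≃ᵐ X × Y × Z) :=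
    MeasurableEquiv.measurable _
  have := Measure.isProbabilityMeasure_map (μ := μ ⊗ₘ κ) hassoc.aemeasurable
  have := Measure.isProbabilityMeasure_map (μ := ν ⊗ₘ η) hassoc.aemeasurable
  rw [bind_map_prodMk_eq_map_compProd, bind_map_prodMk_eq_map_compProd, klDiv_eq_coe_klDiv,
    klDiv_map_measurableEquiv]

lemma measurable_of_map_prodMk {X Y Z : Type*} [MeasurableSpace X] [MeasurableSpace Y]
    [MeasurableSpace Z] {μ : X × Y → Measure Z}
    (hμ : Measurable fun p => (μ p).map fun z => (p.1, p.2, z)) : Measurable μ := by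
  have hsnd : Measurable fun q : X × Y × Z => q.2.2 := measurable_snd.snd
  convert (Measure.measurable_map _ hsnd).comp hμ using 1
  funext p
  rw [Function.comp_apply, Measure.map_map hsnd (by fun_prop)]
  exact Measure.map_id.symm

variable {d : ℕ} {F : Type*} [MeasurableSpace F] {m : F → Fin d → ℝ}
  {S : F → Matrix (Fin d) (Fin d) ℝ}

lemma klDiv_compProd_gaussMV_exp_smul (μ : Measure (ℝ × F)) [IsFiniteMeasure μ]
    (hS : ∀ f, (S f).PosDef) {κ η : Kernel (ℝ × F) (Fin d → ℝ)} [IsFiniteKernel κ]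
    [IsFiniteKernel η] (hκ : ∀ p, κ p = gaussMV d (m p.2) (exp p.1 • S p.2))
    (hη : ∀ p, η p = gaussMV d 0 (exp p.1 • S p.2)) :
    InformationTheory.klDiv (μ ⊗ₘ κ) (μ ⊗ₘ η) =
      ∫⁻ p, ENNReal.ofReal (exp (-p.1) * (m p.2 ⬝ᵥ (S p.2)⁻¹ *ᵥ m p.2) / 2) ∂μ := by
  have hac : ∀ p, κ p ≪ η p := fun p => by
    have hsymm := isHermitian_iff_isSymm.1 ((hS p.2).smul (exp_pos p.1)).isHermitian
    rw [hκ, hη, gaussMV_eq_withDensity_gaussMV_zero _ hsymm]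
    exact withDensity_absolutelyContinuous _ _
  rw [klDiv_compProd_right μ κ η (ae_of_all _ hac)]
  simp only [hκ, hη, klDiv_gaussMV_exp_smul _ (hS _)]

lemma klDiv_prod_compProd_gaussMV_le (Q U : Measure F) [IsProbabilityMeasure Q]
    [IsProbabilityMeasure U] (hS : ∀ f, (S f).PosDef) (a : ℝ) {σ : ℝ} (hσ : 0 < σ)
    {κ η : Kernel (ℝ × F) (Fin d → ℝ)} [IsMarkovKernel κ] [IsMarkovKernel η]
    (hκ : ∀ p, κ p = gaussMV d (m p.2) (exp p.1 • S p.2))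
    (hη : ∀ p, η p = gaussMV d 0 (exp p.1 • S p.2))
    (hint : Integrable (fun f => m f ⬝ᵥ (S f)⁻¹ *ᵥ m f) Q) :
    (InformationTheory.klDiv ((gaussianReal a (σ ^ 2).toNNReal).prod Q ⊗ₘ κ)
        ((cauchyScale σ).prod U ⊗ₘ η) : EReal) ≤
      klDiv Q U + ((log (2 + a ^ 2 / σ ^ 2) +
        (∫ f, m f ⬝ᵥ (S f)⁻¹ *ᵥ m f ∂Q) / (2 * exp (a - σ ^ 2 / 2)) : ℝ) : EReal) := by
  have := isProbabilityMeasure_cauchyScale hσ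
  have hquad : ∀ f, 0 ≤ m f ⬝ᵥ (S f)⁻¹ *ᵥ m f := fun f =>
    (hS f).inv.posSemidef.dotProduct_mulVec_nonneg (m f)
  have havg : 0 ≤ (∫ f, m f ⬝ᵥ (S f)⁻¹ *ᵥ m f ∂Q) / (2 * exp (a - σ ^ 2 / 2)) :=
    div_nonneg (integral_nonneg hquad) (by positivity)
  have hlog : 0 ≤ log (2 + a ^ 2 / σ ^ 2) :=
    log_nonneg (by linarith [one_le_one_add_sq_div a σ])
  have hchain : InformationTheory.klDiv ((gaussianReal a (σ ^ 2).toNNReal).prod Q ⊗ₘ κ)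
      ((cauchyScale σ).prod U ⊗ₘ η) =
        InformationTheory.klDiv (gaussianReal a (σ ^ 2).toNNReal) (cauchyScale σ) +
          InformationTheory.klDiv Q U +
          ENNReal.ofReal ((∫ f, m f ⬝ᵥ (S f)⁻¹ *ᵥ m f ∂Q) / (2 * exp (a - σ ^ 2 / 2))) := by
    rw [InformationTheory.klDiv_compProd_eq_add, klDiv_prod,
      klDiv_compProd_gaussMV_exp_smul _ hS hκ hη,
      lintegral_exp_neg_mul_gaussianReal_prod Q a _ hquad hint, coe_toNNReal _ (sq_nonneg σ)]
  rw [hchain, klDiv_eq_coe_klDiv, ← max_eq_left (add_nonneg hlog havg), ← EReal.coe_ennreal_ofReal,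
    ← EReal.coe_ennreal_add, EReal.coe_ennreal_le_coe_ennreal_iff, ENNReal.ofReal_add hlog havg,
    ← add_assoc, add_comm (InformationTheory.klDiv Q U)]
  gcongr
  exact klDiv_gaussianReal_cauchyScale_le a hσ

end Transportation

theorem kl_transportation_posterior_general
    (d : ℕ) {F : Type*} [MeasurableSpace F]
    (Q U : Measure F) [IsProbabilityMeasure Q] [IsProbabilityMeasure U]
    (μcurve : F → Fin d → ℝ) (Smat : F → Matrix (Fin d) (Fin d) ℝ)
    (hSpos : ∀ f : F, (Smat f).PosDef)
    (alphaBar σ : ℝ) (hσ : 0 < σ)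
    (hkerQ : Measurable fun p : ℝ × F =>
      (gaussMV d (μcurve p.2) (Real.exp p.1 • Smat p.2)).map fun h => (p.1, p.2, h))
    (hkerU : Measurable fun p : ℝ × F =>
      (gaussMV d 0 (Real.exp p.1 • Smat p.2)).map fun h => (p.1, p.2, h))
    (hInt : Integrable (fun f => μcurve f ⬝ᵥ (Smat f)⁻¹.mulVec (μcurve f)) Q) :
    klDiv
      (((gaussianReal alphaBar (σ^2).toNNReal).prod Q).bind fun p =>
        (gaussMV d (μcurve p.2) (Real.exp p.1 • Smat p.2)).map fun h => (p.1, p.2, h))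
      (((cauchyScale σ).prod U).bind fun p =>
        (gaussMV d 0 (Real.exp p.1 • Smat p.2)).map fun h => (p.1, p.2, h)) ≤
    klDiv Q U +
      ((Real.log (2 + alphaBar^2 / σ^2) +
        (∫ f, μcurve f ⬝ᵥ (Smat f)⁻¹.mulVec (μcurve f) ∂Q) /
          (2 * Real.exp (alphaBar - σ^2 / 2)) : ℝ) : EReal) := by
  have := isProbabilityMeasure_cauchyScale hσ
  have hpos : ∀ p : ℝ × F, (exp p.1 • Smat p.2).PosDef := fun p => (hSpos p.2).smul (exp_pos p.1)
  let κ : Kernel (ℝ × F) (Fin d → ℝ) :=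
    ⟨fun p => gaussMV d (μcurve p.2) (exp p.1 • Smat p.2), measurable_of_map_prodMk hkerQ⟩
  let η : Kernel (ℝ × F) (Fin d → ℝ) :=
    ⟨fun p => gaussMV d 0 (exp p.1 • Smat p.2), measurable_of_map_prodMk hkerU⟩
  have : IsMarkovKernel κ := ⟨fun p => (isGaussian_gaussMV _ (hpos p)).toIsProbabilityMeasure⟩
  have : IsMarkovKernel η := ⟨fun p => (isGaussian_gaussMV _ (hpos p)).toIsProbabilityMeasure⟩
  exact (klDiv_bind_map_prodMk _ _ κ η).trans_le
    (klDiv_prod_compProd_gaussMV_le Q U hSpos alphaBar hσ (fun _ => rfl) (fun _ => rfl) hInt)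

/-- **KL decomposition for the transportation posterior (finite-dimensional case).**
For the posterior `Q̃(dα df dh) = N(ᾱ,σ²)(dα) Q(df) N(μ(f), e^α Σ(f))(dh)` and the
prior `Ũ(dα df dh) = 𝒰₁(σ)(dα) U(df) N(0, e^α Σ(f))(dh)`,
`D_KL(Q̃‖Ũ) ≤ D_KL(Q‖U) + log(2 + ᾱ²/σ²) + (∫ μᵀΣ⁻¹μ dQ)/(2 e^{ᾱ−σ²/2})`. -/
theorem kl_transportation_posterior
    (d : ℕ) (hd : 1 ≤ d) (F : Set (Fin d → ℝ)) (hF : MeasurableSet F)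
    (Q U : Measure F) [IsProbabilityMeasure Q] [IsProbabilityMeasure U]
    (μcurve : F → Fin d → ℝ) (hμmeas : Measurable μcurve)
    (Smat : F → Matrix (Fin d) (Fin d) ℝ) (hSmeas : ∀ i j : Fin d, Measurable fun f => Smat f i j)
    (hSpos : ∀ f : F, (Smat f).PosDef)
    (alphaBar σ : ℝ) (hσ : 0 < σ)
    (hkerQ : Measurable fun p : ℝ × F =>
      (gaussMV d (μcurve p.2) (Real.exp p.1 • Smat p.2)).map fun h => (p.1, p.2, h))
    (hkerU : Measurable fun p : ℝ × F =>
      (gaussMV d 0 (Real.exp p.1 • Smat p.2)).map fun h => (p.1, p.2, h))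
    (hInt : Integrable (fun f => μcurve f ⬝ᵥ (Smat f)⁻¹.mulVec (μcurve f)) Q) :
    klDiv
      (((gaussianReal alphaBar (σ^2).toNNReal).prod Q).bind fun p =>
        (gaussMV d (μcurve p.2) (Real.exp p.1 • Smat p.2)).map fun h => (p.1, p.2, h))
      (((cauchyScale σ).prod U).bind fun p =>
        (gaussMV d 0 (Real.exp p.1 • Smat p.2)).map fun h => (p.1, p.2, h)) ≤
    klDiv Q U +
      ((Real.log (2 + alphaBar^2 / σ^2) +
        (∫ f, μcurve f ⬝ᵥ (Smat f)⁻¹.mulVec (μcurve f) ∂Q) /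
          (2 * Real.exp (alphaBar - σ^2 / 2)) : ℝ) : EReal) :=
  kl_transportation_posterior_general d Q U μcurve Smat hSpos alphaBar σ hσ hkerQ hkerU hInt
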